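/- Let A ⊆ ℕ∖{0} with 1 ∈ A. The following are equivalent: (i) whenever N ∈ A and m divides N (m ≥ 1), then m ∈ A; (ii) there exists f ∈ H² such that A = A(f), where A(f) = {N ≥ 1 : f is cyclic for S*^N}. -/

import Mathlib

open scoped InnerProductSpace ENNReal
noncomputable section

/-- The Hardy space `H²(𝔻, X)` identified with `ℓ²(ℕ, X)`. -/
abbrev H2 (X : Type*) [NormedAddCommGroup X] [InnerProductSpace ℂ X] : Type _ :=
  lp (fun _ : ℕ => X) 2

variable {X : Type*} [NormedAddCommGroup X] [InnerProductSpace ℂ X]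

/-- The backward shift `S*` on `H²(𝔻, X)`. -/
def bshift (f : H2 X) : H2 X :=
  ⟨fun n => f (n + 1), by
    have h : Summable fun n : ℕ => ‖f n‖ ^ (2 : ℝ≥0∞).toReal :=
      (memℓp_gen_iff (by norm_num)).1 (lp.memℓp f)
    exact memℓp_gen ((summable_nat_add_iff 1).2 h)⟩

/-- `E_F`: the smallest closed `S*`-invariant subspace containing the family `F`. -/
def EF (F : Set (H2 X)) : Submodule ℂ (H2 X) :=
  (Submodule.span ℂ {g : H2 X | ∃ f ∈ F, ∃ n : ℕ, g = bshift^[n] f}).topologicalClosure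

/-- `E_f` for a single function. -/
def Ef (f : H2 X) : Submodule ℂ (H2 X) :=
  EF {f}

/-- `X_*(F) = ⋂_m closed-span {f̂(k) : k ≥ m, f ∈ F}`. -/
def XstarF (F : Set (H2 X)) : Submodule ℂ X :=
  ⨅ m : ℕ, (Submodule.span ℂ {x : X | ∃ f ∈ F, ∃ k ≥ m, x = f k}).topologicalClosure

def Xstar (f : H2 X) : Submodule ℂ X := XstarF {f}

/-- `P : X → X` is an orthogonal projection: idempotent and self-adjoint. -/
def IsOrthoProj {Y : Type*} [NormedAddCommGroup Y] [InnerProductSpace ℂ Y]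
    (P : Y →L[ℂ] Y) : Prop :=
  (∀ x, P (P x) = P x) ∧ ∀ x y, ⟪P x, y⟫_ℂ = ⟪x, P y⟫_ℂ

/-- A sequence in a Hilbert space is completely relatively compact if for every orthogonal
projection `P` the normalized sequence `{P aₖ / ‖P aₖ‖ : P aₖ ≠ 0}` is relatively compact. -/
def CRC {Y : Type*} [NormedAddCommGroup Y] [InnerProductSpace ℂ Y] (a : ℕ → Y) : Prop :=
  ∀ P : Y →L[ℂ] Y, IsOrthoProj P →
    IsCompact (closure {v : Y | ∃ k, P (a k) ≠ 0 ∧ v = ‖P (a k)‖⁻¹ • P (a k)})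

/-- A subset of `ℕ` is Hadamard lacunary. -/
def HadLac (Λ : Set ℕ) : Prop :=
  ∃ d : ℝ, 1 < d ∧ ∀ m ∈ Λ, ∀ n ∈ Λ, m < n → d * m ≤ n

/-- The Fourier spectrum. -/
def spec (f : H2 X) : Set ℕ := {k : ℕ | f k ≠ 0}

/-- `H²(𝔻, Y)` for a subspace `Y ⊆ X`, as a submodule of `H²(𝔻, X)`. -/
def H2sub (Y : Submodule ℂ X) : Submodule ℂ (H2 X) where
  carrier := {g : H2 X | ∀ n, g n ∈ Y}
  add_mem' := by
    intro a b ha hb n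
    have : (↑(a + b) : ∀ _ : ℕ, X) n = a n + b n := by
      rw [lp.coeFn_add]; rfl
    rw [this]
    exact Y.add_mem (ha n) (hb n)
  zero_mem' := by
    intro n
    have : (↑(0 : H2 X) : ∀ _ : ℕ, X) n = 0 := by rw [lp.coeFn_zero]; rfl
    rw [this]
    exact Y.zero_mem
  smul_mem' := by
    intro c a ha n
    have : (↑(c • a) : ∀ _ : ℕ, X) n = c • a n := by rw [lp.coeFn_smul]; rfl
    rw [this]
    exact Y.smul_mem c (ha n)

/-- A polynomial: finitely many nonzero Taylor coefficients. -/
def PolyH2 (f : H2 X) : Prop := {n : ℕ | f n ≠ 0}.Finite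


/-- `X_∞(f)`: the closed span of all closed subspaces `Y ⊆ X` with
`H²(𝔻, Y) ⊆ E_{S*^N f}` for every `N ≥ 0`. -/
def Xinf (f : H2 X) : Submodule ℂ X :=
  (Submodule.span ℂ {x : X | ∃ Y : Submodule ℂ X, IsClosed (Y : Set X) ∧
      (∀ N : ℕ, H2sub Y ≤ Ef (bshift^[N] f)) ∧ x ∈ Y}).topologicalClosure

/-- The smallest closed `S*^N`-invariant subspace containing `f`;
`f` is cyclic for `S*^N` iff this equals `⊤`. -/
def EfPow (f : H2 X) (N : ℕ) : Submodule ℂ (H2 X) :=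
  (Submodule.span ℂ {g : H2 X | ∃ k : ℕ, g = bshift^[N * k] f}).topologicalClosure

/-!
Cyclicity for `S*^N` passes to the divisors `m` of `N`, since the powers of `S*^N` are among those
of `S*^m`.

Conversely, given a divisor-closed `A`, take `f = ∑_{n ∈ Λ} zⁿ / n!` for a sparse set `Λ` of
numbers `p d` with `p` prime, `d ∈ A` and `d ≤ p`. If `n ∈ Λ` has no element of `Λ` just below it,
then `n! S*^(n - m) f` is close to `zᵐ`, because the coefficients decay superexponentially.
By Dirichlet's theorem, for `N ∈ A` such `n` can be found in every residue class mod `N`, so `f` is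
cyclic for `S*^N`. If `M ∉ A` divides `p d`, then `M` does not divide `d`, whence `p ≤ M` and
`p d ≤ M ^ 2`; so `Λ` contains only finitely many multiples of `M`, and `S*^(M k) f` has a
vanishing coefficient at a fixed large multiple of `M` for every `k`.
-/

open scoped Nat

section Hardy

theorem bshift_iterate_apply (f : H2 X) (d n : ℕ) : (bshift^[d] f) n = f (n + d) := by
  induction d generalizing f with
  | zero => rfl
  | succ _ ih => exact ih (bshift f)

theorem EfPow_le_EfPow_of_dvd (f : H2 X) {m N : ℕ} (h : m ∣ N) : EfPow f N ≤ EfPow f m := by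
  obtain ⟨c, rfl⟩ := h
  refine Submodule.topologicalClosure_mono (Submodule.span_mono ?_)
  rintro g ⟨k, rfl⟩
  exact ⟨c * k, by rw [mul_assoc]⟩

theorem bshift_iterate_mem_EfPow (f : H2 X) {N d : ℕ} (h : N ∣ d) : bshift^[d] f ∈ EfPow f N := by
  obtain ⟨k, rfl⟩ := h
  exact Submodule.le_topologicalClosure _ (Submodule.subset_span ⟨k, rfl⟩)

theorem EfPow_ne_top_of_forall_apply_eq_zero [Nontrivial X] {f : H2 X} {N n : ℕ}
    (h : ∀ k, f (n + N * k) = 0) : EfPow f N ≠ ⊤ := by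
  let eval : H2 X →L[ℂ] X := lp.evalCLM ℂ (fun _ : ℕ => X) 2 n
  have hker : EfPow f N ≤ eval.ker := by
    refine Submodule.topologicalClosure_minimal _ (Submodule.span_le.2 ?_) eval.isClosed_ker
    rintro g ⟨k, rfl⟩
    exact (bshift_iterate_apply f (N * k) n).trans (h k)
  intro htop
  obtain ⟨x, hx⟩ := exists_ne (0 : X)
  have hmem : lp.single 2 n x ∈ eval.ker := hker (htop ▸ Submodule.mem_top)
  exact hx ((lp.single_apply_self (E := fun _ : ℕ => X) 2 n x).symm.trans hmem)

theorem EfPow_ne_top_of_finite_dvd [Nontrivial X] {f : H2 X} {N : ℕ} (hN : 1 ≤ N)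
    (h : {n ∈ spec f | N ∣ n}.Finite) : EfPow f N ≠ ⊤ := by
  obtain ⟨b, hb⟩ := h.bddAbove
  refine EfPow_ne_top_of_forall_apply_eq_zero (n := N * (b + 1)) fun k => ?_
  by_contra hne
  have hle : N * (b + 1) + N * k ≤ b := hb ⟨hne, b + 1 + k, by ring⟩
  have hlt : b + 1 ≤ N * (b + 1) := Nat.le_mul_of_pos_left _ hN
  omega

theorem eq_top_of_forall_single_mem {E : Submodule ℂ (H2 X)} (hE : IsClosed (E : Set (H2 X)))
    (h : ∀ n x, (lp.single 2 n x : H2 X) ∈ E) : E = ⊤ :=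
  eq_top_iff.2 fun g _ => hE.mem_of_tendsto (lp.hasSum_single ENNReal.ofNat_ne_top g)
    (.of_forall fun _ => E.sum_mem fun n _ => h n (g n))

theorem norm_le_of_hasSum_of_norm_apply_le {f : H2 X} {b : ℕ → ℝ} {s : ℝ} (hb : HasSum b s)
    (h : ∀ n, ‖f n‖ ≤ b n) : ‖f‖ ≤ s := by
  have hsum : HasSum (fun n => (lp.single 2 n (f n) : H2 X)) f :=
    lp.hasSum_single ENNReal.ofNat_ne_top f
  refine hsum.norm_le_of_bounded hb fun n => ?_
  rw [lp.norm_single two_pos]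
  exact h n

end Hardy

section ExpOn

/-- The part `∑_{n ∈ Λ} zⁿ / n!` of the exponential series with exponents in `Λ`, as an element of
`H²`. The factorials serve only to make each coefficient dominate all later ones. -/
def expOn (Λ : Set ℕ) : H2 ℂ :=
  ⟨Λ.indicator fun n => (n ! : ℂ)⁻¹, by
    have hsummable : Summable fun n : ℕ => ‖Λ.indicator (fun n => (n ! : ℂ)⁻¹) n‖ :=
      .of_nonneg_of_le (fun _ => norm_nonneg _) (fun n => (norm_indicator_le_norm_self _ n).trans
        (by simp)) (Real.summable_pow_div_factorial 1)
    exact (memℓp_gen (p := 1) (by simpa using hsummable)).of_exponent_ge one_le_two⟩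

variable {Λ : Set ℕ} {m n : ℕ}

theorem expOn_apply_of_mem (h : n ∈ Λ) : expOn Λ n = (n ! : ℂ)⁻¹ :=
  Set.indicator_of_mem h fun n => (n ! : ℂ)⁻¹

theorem expOn_apply_of_notMem (h : n ∉ Λ) : expOn Λ n = 0 :=
  Set.indicator_of_notMem h fun n => (n ! : ℂ)⁻¹

theorem spec_expOn (Λ : Set ℕ) : spec (expOn Λ) = Λ := by
  refine Set.ext fun n => ⟨not_imp_comm.1 expOn_apply_of_notMem, fun hn => ?_⟩
  exact (expOn_apply_of_mem hn).trans_ne (inv_ne_zero (Nat.cast_ne_zero.2 n.factorial_ne_zero))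

theorem norm_expOn_apply_le (Λ : Set ℕ) (n : ℕ) : ‖expOn Λ n‖ ≤ (n ! : ℝ)⁻¹ :=
  (norm_indicator_le_norm_self (fun n => (n ! : ℂ)⁻¹) n).trans (by simp)

theorem factorial_div_factorial_le (n k : ℕ) :
    (n ! : ℝ) * ((n + 1 + k)! : ℝ)⁻¹ ≤ (n + 1 : ℝ)⁻¹ * (1 / 2) ^ k := by
  have hfact : n ! * ((n + 1) * 2 ^ k) ≤ (n + 1 + k)! := calc
    n ! * ((n + 1) * 2 ^ k) = (n + 1)! * 2 ^ k := by rw [Nat.factorial_succ]; ring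
    _ ≤ (n + 1)! * (n + 1 + 1) ^ k := by gcongr; omega
    _ ≤ (n + 1 + k)! := Nat.factorial_mul_pow_le_factorial
  calc (n ! : ℝ) * ((n + 1 + k)! : ℝ)⁻¹
      ≤ n ! * (n ! * ((n + 1) * 2 ^ k) : ℝ)⁻¹ := by gcongr; exact_mod_cast hfact
    _ = (n + 1 : ℝ)⁻¹ * (1 / 2) ^ k := by rw [one_div, inv_pow]; field_simp

theorem norm_smul_bshift_expOn_sub_single_le (hn : n ∈ Λ) (hmn : m ≤ n)
    (hgap : ∀ k ∈ Λ, k < n → k + m < n) :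
    ‖(n ! : ℂ) • bshift^[n - m] (expOn Λ) - lp.single 2 m 1‖ ≤ 2 ^ (m + 2) / (n + 1) := by
  have hgeom : HasSum (fun j : ℕ => 2 ^ (m + 1) / (n + 1 : ℝ) * (1 / 2) ^ j)
      (2 ^ (m + 2) / (n + 1)) := by
    rw [pow_succ 2 (m + 1), ← div_mul_eq_mul_div]
    exact hasSum_geometric_two.mul_left _
  refine norm_le_of_hasSum_of_norm_apply_le hgeom fun j => ?_
  rw [lp.coeFn_sub, Pi.sub_apply, lp.coeFn_smul, Pi.smul_apply, bshift_iterate_apply, smul_eq_mul]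
  rcases lt_trichotomy j m with hjm | rfl | hjm
  · have hj : j + (n - m) ∉ Λ := fun hj => by have := hgap _ hj (by omega); omega
    rw [expOn_apply_of_notMem hj, lp.single_apply_ne _ _ _ hjm.ne, mul_zero, sub_zero, norm_zero]
    positivity
  · rw [Nat.add_sub_cancel' hmn, expOn_apply_of_mem hn, lp.single_apply_self,
      mul_inv_cancel₀ (mod_cast n.factorial_ne_zero), sub_self, norm_zero]
    positivity
  · obtain ⟨k, rfl⟩ := Nat.exists_eq_add_of_lt hjm
    rw [lp.single_apply_ne _ _ _ hjm.ne', sub_zero, norm_mul, Complex.norm_natCast,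
      show m + k + 1 + (n - m) = n + 1 + k by omega]
    calc (n ! : ℝ) * ‖expOn Λ (n + 1 + k)‖
        ≤ n ! * ((n + 1 + k)! : ℝ)⁻¹ := by gcongr; exact norm_expOn_apply_le _ _
      _ ≤ (n + 1 : ℝ)⁻¹ * (1 / 2) ^ k := factorial_div_factorial_le n k
      _ = 2 ^ (m + 1) / (n + 1) * (1 / 2) ^ (m + k + 1) := by
        simp only [one_div, inv_pow]
        field_simp
        ring

theorem EfPow_expOn_eq_top {N : ℕ}
    (h : ∀ m, {n ∈ Λ | n ≡ m [MOD N] ∧ ∀ k ∈ Λ, k < n → k + m < n}.Infinite) :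
    EfPow (expOn Λ) N = ⊤ := by
  have hclosed : IsClosed (EfPow (expOn Λ) N : Set (H2 ℂ)) :=
    Submodule.isClosed_topologicalClosure _
  have hmonomial (m : ℕ) : lp.single 2 m 1 ∈ EfPow (expOn Λ) N := by
    refine hclosed.closure_subset (Metric.mem_closure_iff.2 fun ε hε => ?_)
    obtain ⟨b, hb⟩ := exists_nat_gt (2 ^ (m + 2) / ε)
    obtain ⟨n, ⟨hn, hmod, hgap⟩, hlt⟩ := (h m).exists_gt (max m b)
    obtain ⟨hmn, hbn⟩ := max_lt_iff.1 hlt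
    have hdvd : N ∣ n - m := (Nat.modEq_iff_dvd' hmn.le).1 hmod.symm
    refine ⟨_, Submodule.smul_mem _ (n ! : ℂ) (bshift_iterate_mem_EfPow _ hdvd), ?_⟩
    rw [dist_comm, dist_eq_norm]
    refine (norm_smul_bshift_expOn_sub_single_le hn hmn.le hgap).trans_lt ?_
    have hbn' : (b : ℝ) < n := mod_cast hbn
    exact (div_lt_comm₀ (by positivity) hε).2 (by linarith)
  refine eq_top_of_forall_single_mem hclosed fun m x => ?_
  rw [← mul_one x, ← smul_eq_mul, lp.single_smul]
  exact Submodule.smul_mem _ x (hmonomial m)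

end ExpOn

section SparseSet

theorem exists_seq_mem_and_lt_succ {S : ℕ → Set ℕ} (hS : ∀ i, (S i).Infinite) (b : ℕ → ℕ → ℕ) :
    ∃ l : ℕ → ℕ, ∀ i, l i ∈ S i ∧ b i (l i) < l (i + 1) := by
  choose next hmem hlt using fun i => (hS i).exists_gt
  let l : ℕ → ℕ := Nat.rec (next 0 0) fun i x => next (i + 1) (b i x)
  exact ⟨l, fun i => ⟨by cases i <;> exact hmem _ _, hlt _ _⟩⟩

theorem exists_forall_infinite_fiber (ι : Type*) [Countable ι] [Nonempty ι] :
    ∃ e : ℕ → ι, ∀ i, {t | e t = i}.Infinite := by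
  obtain ⟨e, he⟩ := exists_surjective_nat (ι × ℕ)
  refine ⟨fun t => (e t).1, fun i => ?_⟩
  have hfiber : (Set.range fun k : ℕ => (i, k)).Infinite :=
    Set.infinite_range_of_injective (Prod.mk_right_injective i)
  refine (hfiber.preimage fun x _ => he x).mono ?_
  rintro t ⟨k, hk⟩
  exact congrArg Prod.fst hk.symm

theorem exists_sparse_subset_iUnion {ι : Type*} [Countable ι] {S : ι → Set ℕ}
    (hS : ∀ i, (S i).Infinite) :
    ∃ Λ ⊆ ⋃ i, S i, ∀ i m, {n ∈ Λ | n ∈ S i ∧ ∀ k ∈ Λ, k < n → k + m < n}.Infinite := by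
  cases isEmpty_or_nonempty ι
  · exact ⟨∅, Set.empty_subset _, isEmptyElim⟩
  obtain ⟨e, he⟩ := exists_forall_infinite_fiber ι
  obtain ⟨l, hl⟩ := exists_seq_mem_and_lt_succ (fun t => hS (e t)) fun t x => x + t
  have hmono : StrictMono l := strictMono_nat_of_lt_succ fun t => by have := (hl t).2; omega
  refine ⟨Set.range l, ?_, fun i m => Set.infinite_of_forall_exists_gt fun b => ?_⟩
  · rintro _ ⟨t, rfl⟩
    exact Set.mem_iUnion.2 ⟨e t, (hl t).1⟩
  obtain ⟨t, rfl, ht⟩ := (he i).exists_gt (max m b)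
  obtain ⟨u, rfl⟩ := Nat.exists_eq_add_one_of_ne_zero (Nat.ne_zero_of_lt ht)
  refine ⟨l (u + 1), ⟨⟨u + 1, rfl⟩, (hl _).1, ?_⟩, ?_⟩
  · rintro _ ⟨s, rfl⟩ hs
    have hsu : l s ≤ l u := hmono.monotone (Nat.lt_succ_iff.1 (hmono.lt_iff_lt.1 hs))
    have hstep := (hl u).2
    omega
  · have hid := hmono.le_apply (x := u + 1)
    omega

end SparseSet

section PrimeMultiples

/-- The numbers `p d` with `p` prime, `d ∈ A` and `d ≤ p`, from which the spectrum of the cyclic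
function is chosen. The bound `d ≤ p` leaves only finitely many of them for each `p`. -/
def primeMultiples (A : Set ℕ) : Set ℕ :=
  {n | ∃ p d, p.Prime ∧ d ∈ A ∧ d ≤ p ∧ n = p * d}

variable {A : Set ℕ}

theorem finite_primeMultiples_dvd {M : ℕ} (hM : 1 ≤ M) (hMA : ∀ d ∈ A, ¬M ∣ d) :
    {n ∈ primeMultiples A | M ∣ n}.Finite := by
  refine (Set.finite_Iic (M ^ 2)).subset ?_
  rintro _ ⟨⟨p, d, hp, hd, hdp, rfl⟩, hdvd⟩
  have hpM : p ≤ M := by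
    by_contra! hlt
    have hcop : M.Coprime p :=
      ((Nat.coprime_or_dvd_of_prime hp M).resolve_right (Nat.not_dvd_of_pos_of_lt hM hlt)).symm
    exact hMA d hd (hcop.dvd_of_dvd_mul_left hdvd)
  exact (Nat.mul_le_mul hpM (hdp.trans hpM)).trans_eq (sq M).symm

theorem infinite_primeMultiples_modEq {N : ℕ} (hN : 1 ≤ N)
    (hdiv : ∀ d : ℕ, 1 ≤ d → d ∣ N → d ∈ A) (c : ℕ) :
    {n ∈ primeMultiples A | n ≡ c [MOD N]}.Infinite := by
  refine Set.infinite_of_forall_exists_gt fun b => ?_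
  have hgcd : 0 < c.gcd N := Nat.gcd_pos_of_pos_right c hN
  obtain ⟨c', N', hcop, hc, hN'⟩ := Nat.exists_coprime c N
  have hN'0 : N' ≠ 0 := by rintro rfl; omega
  obtain ⟨p, hlt, hp, hmod⟩ := Nat.forall_exists_prime_gt_and_modEq (max b (c.gcd N)) hN'0 hcop
  obtain ⟨hbp, hdp⟩ := max_lt_iff.1 hlt
  refine ⟨p * c.gcd N, ⟨⟨p, c.gcd N, hp, ?_, hdp.le, rfl⟩, ?_⟩, ?_⟩
  · exact hdiv _ hgcd (Nat.gcd_dvd_right c N)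
  · have hmodN := hmod.mul_right' (c.gcd N)
    rwa [← hc, ← hN'] at hmodN
  · exact hbp.trans_le (Nat.le_mul_of_pos_right p hgcd)

end PrimeMultiples

/-- For `A ⊆ ℕ∖{0}` with `1 ∈ A`: `A` is closed under taking divisors iff `A = A(f)` for
some `f ∈ H²`, where `A(f) = {N ≥ 1 : f is cyclic for S*^N}`. -/
theorem divisor_closed_iff_eq_Af
    (A : Set ℕ) (hA : A ⊆ {N : ℕ | 1 ≤ N}) (h1 : 1 ∈ A) :
    (∀ N ∈ A, ∀ m : ℕ, 1 ≤ m → m ∣ N → m ∈ A) ↔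
      ∃ f : H2 ℂ, A = {N : ℕ | 1 ≤ N ∧ EfPow f N = ⊤} := by
  constructor
  · intro hdiv
    obtain ⟨Λ, hΛ, hsparse⟩ := exists_sparse_subset_iUnion fun i : A × ℕ =>
      infinite_primeMultiples_modEq (hA i.1.2) (hdiv i.1 i.1.2) i.2
    have hΛ' : Λ ⊆ primeMultiples A := hΛ.trans (Set.iUnion_subset fun _ => Set.sep_subset _ _)
    refine ⟨expOn Λ, Set.ext fun N => ⟨fun hN => ⟨hA hN, ?_⟩, fun ⟨hN, htop⟩ => ?_⟩⟩
    · refine EfPow_expOn_eq_top fun m => (hsparse (⟨N, hN⟩, m) m).mono ?_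
      exact fun n ⟨hn, hmem, hgap⟩ => ⟨hn, hmem.2, hgap⟩
    · by_contra hNA
      refine EfPow_ne_top_of_finite_dvd hN ?_ htop
      rw [spec_expOn]
      have hfinite := finite_primeMultiples_dvd hN fun d hd hdvd => hNA (hdiv d hd N hN hdvd)
      exact hfinite.subset fun n hn => ⟨hΛ' hn.1, hn.2⟩
  · rintro ⟨f, rfl⟩ N ⟨-, hN⟩ m hm hdvd
    exact ⟨hm, top_unique (hN ▸ EfPow_le_EfPow_of_dvd f hdvd)⟩

end
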